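/- Kučera: For every A ∈ 2^ω with ∅' ≤_T A there is a Martin-Löf random R ∈ 2^ω with R ≡_T A; hence every Turing degree above the degree of the halting problem contains a Martin-Löf random sequence. -/

import Mathlib

open scoped ENNReal NNReal Classical

namespace AR

/-- Elements of Cantor space `2^ω`: infinite binary sequences. -/
abbrev Seq := ℕ → Bool

/-- Finite binary strings `2^{<ω}`. -/
abbrev Str := List Bool

/-- The first `n` bits of a sequence `A`, as a finite string (`A↾n`). -/
def pre (A : Seq) (n : ℕ) : Str := List.ofFn fun i : Fin n => A i

/-- The basic clopen cylinder `[σ]` of all sequences extending `σ`. -/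
def cyl (σ : Str) : Set Seq := {A | pre A σ.length = σ}

/-- A measure on Cantor space is *fair-coin* if every cylinder `[σ]` has measure
`2^{-|σ|}`; this uniquely characterizes the usual product measure `μ` on `2^ω`. -/
def FairCoin (μ : MeasureTheory.Measure Seq) : Prop :=
  ∀ σ : Str, μ (cyl σ) = (2 : ℝ≥0∞)⁻¹ ^ σ.length

/-- A machine is a partial computable function `2^{<ω} ⇀ 2^{<ω}`. -/
def IsMachine (M : Str →. Str) : Prop := Partrec M

/-- Kolmogorov complexity of `τ` relative to the machine `M`:
`C_M(τ) = min{|σ| : M(σ)↓ = τ}`, with value `∞` if no such `σ` exists. -/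
noncomputable def Cplx (M : Str →. Str) (τ : Str) : ℕ∞ :=
  sInf ((fun σ : Str => (σ.length : ℕ∞)) '' {σ | τ ∈ M σ})

/-- A universal machine: a machine simulating every machine up to an additive
constant.  `Cplx U` for universal `U` is plain Kolmogorov complexity `C`. -/
def UniversalMachine (U : Str →. Str) : Prop :=
  IsMachine U ∧ ∀ M : Str →. Str, IsMachine M → ∃ c : ℕ, ∀ τ, Cplx U τ ≤ Cplx M τ + c

/-- A set of strings is prefix-free if none of its elements is a proper initial
segment of another. -/
def PrefixFree (S : Set Str) : Prop :=
  ∀ σ ∈ S, ∀ τ ∈ S, σ <+: τ → σ = τ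

/-- A prefix-free machine: a machine whose domain is prefix-free. -/
def PrefixFreeMachine (M : Str →. Str) : Prop :=
  IsMachine M ∧ PrefixFree {σ | (M σ).Dom}

/-- A universal prefix-free machine.  `Cplx U` for such `U` is prefix-free
Kolmogorov complexity `K`. -/
def UniversalPFMachine (U : Str →. Str) : Prop :=
  PrefixFreeMachine U ∧
    ∀ M : Str →. Str, PrefixFreeMachine M → ∃ c : ℕ, ∀ τ, Cplx U τ ≤ Cplx M τ + c

/-- A c.e. (recursively enumerable) predicate. -/
def CEPred {α} [Primcodable α] (p : α → Prop) : Prop :=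
  Partrec fun a => Part.assert (p a) fun _ => Part.some ()

/-- A Martin-Löf test: a sequence of uniformly Σ⁰₁ classes `U i`, given by a single
c.e. set `W` of pairs, with `μ (U i) ≤ 2^{-i}`. -/
def MLTest (μ : MeasureTheory.Measure Seq) (U : ℕ → Set Seq) : Prop :=
  ∃ W : Set (ℕ × Str), CEPred (· ∈ W) ∧
    (∀ i, U i = ⋃ σ ∈ {σ : Str | (i, σ) ∈ W}, cyl σ) ∧
    ∀ i, μ (U i) ≤ (2 : ℝ≥0∞)⁻¹ ^ i

/-- `A` is Martin-Löf random if it passes every Martin-Löf test. -/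
def MLRandom (μ : MeasureTheory.Measure Seq) (A : Seq) : Prop :=
  ∀ U : ℕ → Set Seq, MLTest μ U → A ∉ ⋂ i, U i

/-- Oracle partial recursion: `RecIn O f` means that the partial function
`f : ℕ ⇀ ℕ` is partial recursive relative to the oracle `O`
(Mathlib's `Nat.RecursiveIn`). -/
inductive RecIn (O : ℕ →. ℕ) : (ℕ →. ℕ) → Prop
  | zero : RecIn O (pure 0)
  | succ : RecIn O Nat.succ
  | left : RecIn O ↑fun n : ℕ => n.unpair.1
  | right : RecIn O ↑fun n : ℕ => n.unpair.2
  | oracle : RecIn O O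
  | pair {f g} : RecIn O f → RecIn O g → RecIn O fun n => Nat.pair <$> f n <*> g n
  | comp {f g} : RecIn O f → RecIn O g → RecIn O fun n => g n >>= f
  | prec {f g} : RecIn O f → RecIn O g → RecIn O (Nat.unpaired fun a n =>
      n.rec (f a) fun y IH => do let i ← IH; g (Nat.pair a (Nat.pair y i)))
  | rfind {f} : RecIn O f →
      RecIn O fun a => Nat.rfind fun n => (fun m => m = 0) <$> f (Nat.pair a n)

/-- The characteristic-function oracle associated to a sequence `A ∈ 2^ω`. -/
def oracleOf (A : Seq) : ℕ →. ℕ := fun n => Part.some (cond (A n) 1 0)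

/-- The characteristic-function oracle associated to a set of naturals. -/
noncomputable def oracleOfSet (S : Set ℕ) : ℕ →. ℕ :=
  fun n => Part.some (if n ∈ S then 1 else 0)

/-- Relative partial computability for partial functions between coded types. -/
def PartrecIn (O : ℕ →. ℕ) {α σ} [Primcodable α] [Primcodable σ] (f : α →. σ) : Prop :=
  RecIn O fun n =>
    Part.bind (Encodable.decode (α := α) n) fun a => (f a).map Encodable.encode

/-- A predicate is c.e. relative to the oracle `O`. -/
def CEPredIn (O : ℕ →. ℕ) {α} [Primcodable α] (p : α → Prop) : Prop :=
  PartrecIn O fun a => Part.assert (p a) fun _ => Part.some ()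

/-- Turing reducibility between oracles: `f` is recursive in `g`. -/
def TuringLE (f g : ℕ →. ℕ) : Prop := RecIn g f

/-- Turing reducibility `B ≤_T A` between sequences. -/
def SeqTuringLE (B A : Seq) : Prop := TuringLE (oracleOf B) (oracleOf A)

/-- The `e`-th partial computable function `φ_e`, via Mathlib's standard
enumeration of codes for the partial recursive functions. -/
def phi (e : ℕ) : ℕ →. ℕ := (Denumerable.ofNat Nat.Partrec.Code e).eval

/-- The halting problem `∅' = {e : φ_e(e)↓}`. -/
def haltingSet : Set ℕ := {e | (phi e e).Dom}

/-- A Martin-Löf test relative to the oracle `O`. -/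
def MLTestIn (O : ℕ →. ℕ) (μ : MeasureTheory.Measure Seq) (U : ℕ → Set Seq) : Prop :=
  ∃ W : Set (ℕ × Str), CEPredIn O (· ∈ W) ∧
    (∀ i, U i = ⋃ σ ∈ {σ : Str | (i, σ) ∈ W}, cyl σ) ∧
    ∀ i, μ (U i) ≤ (2 : ℝ≥0∞)⁻¹ ^ i

/-- Martin-Löf randomness relative to the oracle `O`. -/
def MLRandomIn (O : ℕ →. ℕ) (μ : MeasureTheory.Measure Seq) (A : Seq) : Prop :=
  ∀ U : ℕ → Set Seq, MLTestIn O μ U → A ∉ ⋂ i, U i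

section Relative
open Encodable Part
variable {O : ℕ →. ℕ} {α β γ : Type*} [Primcodable α] [Primcodable β] [Primcodable γ]

theorem RecIn.of_eq {f g : ℕ →. ℕ} (hf : RecIn O f) (H : ∀ n, f n = g n) : RecIn O g :=
  (funext H : f = g) ▸ hf

theorem RecIn.of_partrec {f : ℕ →. ℕ} (hf : Nat.Partrec f) : RecIn O f := by
  induction hf with
  | zero => exact .zero
  | succ => exact .succ
  | left => exact .left
  | right => exact .right
  | pair _ _ ihf ihg => exact .pair ihf ihg
  | comp _ _ ihf ihg => exact .comp ihf ihg
  | prec _ _ ihf ihg => exact .prec ihf ihg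
  | rfind _ ihf => exact .rfind ihf

/-- A total function is computable relative to the oracle `O`. -/
def TotalIn (O : ℕ →. ℕ) (f : α → β) : Prop := PartrecIn O fun a => Part.some (f a)

theorem TotalIn.of_eq {f g : α → β} (hf : TotalIn O f) (H : ∀ a, f a = g a) : TotalIn O g :=
  (funext H : f = g) ▸ hf

theorem TotalIn.of_computable {f : α → β} (hf : Computable f) : TotalIn O f :=
  RecIn.of_partrec hf

theorem TotalIn.of_primrec {f : α → β} (hf : Primrec f) : TotalIn O f :=
  .of_computable hf.to_comp

theorem TotalIn.comp {f : β → γ} {g : α → β} (hf : TotalIn O f) (hg : TotalIn O g) :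
    TotalIn O fun a => f (g a) :=
  (RecIn.comp hf hg).of_eq fun n => by
    rcases e : decode (α := α) n with - | a <;> simp [encodek]

theorem TotalIn.pair {f : α → β} {g : α → γ} (hf : TotalIn O f) (hg : TotalIn O g) :
    TotalIn O fun a => (f a, g a) :=
  (RecIn.pair hf hg).of_eq fun n => by
    rcases e : decode (α := α) n with - | a <;> simp [Seq.seq]

/-- Primitive recursion relative to an oracle. -/
theorem TotalIn.nat_rec {g : ℕ × β → β} (b : β) (hg : TotalIn O g) :
    TotalIn O fun n : ℕ => (n.rec b fun k ih => g (k, ih) : β) := by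
  have hb : RecIn O fun _ : ℕ => Part.some (encode b) :=
    RecIn.of_partrec (Nat.Partrec.of_primrec (Nat.Primrec.const (encode b)))
  have hid : RecIn O fun n : ℕ => Part.some n := RecIn.of_partrec Nat.Partrec.some
  have hz : RecIn O fun _ : ℕ => Part.some 0 :=
    RecIn.of_partrec (Nat.Partrec.of_primrec (Nat.Primrec.const 0))
  refine (RecIn.comp (RecIn.prec hb (RecIn.comp hg .right)) (RecIn.pair hz hid)).of_eq fun n => ?_
  simp only [Seq.seq, map_eq_map, map_some, bind_some, bind_eq_bind, coe_some, decode_nat]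
  induction n with
  | zero => simp
  | succ k ih =>
    simp at ih
    simp [ih, encodek]

/-- Unbounded search relative to an oracle. -/
theorem TotalIn.find {p : α → ℕ → Bool} (hp : TotalIn O fun x : α × ℕ => p x.1 x.2)
    (h : ∀ a, ∃ n, p a n = true) : TotalIn O fun a => Nat.find (h a) := by
  have hq : TotalIn O fun x : α × ℕ => cond (p x.1 x.2) 0 1 :=
    (TotalIn.of_primrec (Primrec.dom_bool fun b => cond b 0 1)).comp hp
  refine (RecIn.rfind hq).of_eq fun n => ?_
  rcases e : decode (α := α) n with - | a
  · simpa [e] using Nat.rfind_zero_none _ rfl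
  · simp only [decode_prod_val, Nat.unpair_pair, e]
    simp only [coe_some, bind_some, map_some, encode_nat, decode_nat, Option.bind_some,
      Option.map_some, map_eq_map]
    refine Part.eq_some_iff.2 (Nat.mem_rfind.2 ⟨?_, fun {m} hm => ?_⟩)
    · simp [Nat.find_spec (h a)]
    · simp [Nat.find_min (h a) hm]

theorem totalIn_iff {f : ℕ → Bool} : TotalIn O f ↔ TuringLE (oracleOf f) O := by
  have : (fun n => Part.bind (decode (α := ℕ) n) fun a => (Part.some (f a)).map encode)
      = oracleOf f := by
    funext n
    cases h : f n <;> simp [oracleOf, h]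
  unfold TotalIn PartrecIn TuringLE
  rw [this]

theorem TotalIn.oracle (A : Seq) : TotalIn (oracleOf A) A :=
  totalIn_iff.2 .oracle

theorem pre_succ (A : Seq) (n : ℕ) : pre A (n + 1) = pre A n ++ [A n] := by
  rw [pre, List.ofFn_succ_last]
  simp [pre]

theorem TotalIn.pre (A : Seq) : TotalIn (oracleOf A) (pre A) := by
  have hg : TotalIn (oracleOf A) fun x : ℕ × Str => x.2 ++ [A x.1] :=
    (TotalIn.of_primrec (f := fun y : Str × Bool => y.1 ++ [y.2]) Primrec.list_concat).comp
      ((TotalIn.of_primrec Primrec.snd).pair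
        ((TotalIn.oracle A).comp (TotalIn.of_primrec Primrec.fst)))
  refine (TotalIn.nat_rec [] hg).of_eq fun n => ?_
  induction n with
  | zero => simp [AR.pre]
  | succ k ih => simp only [pre_succ, ← ih]

/-- Every `Σ⁰₁` predicate is decidable relative to an oracle computing the halting problem. -/
theorem TotalIn.decide_exists {p : α → ℕ → Prop} (hp : PrimrecRel p)
    (hO : TuringLE (oracleOfSet haltingSet) O) : TotalIn O fun a => decide (∃ t, p a t) := by
  have hf : Partrec fun a : α => Nat.rfind fun t => Part.some (decide (p a t)) :=
    Partrec.rfind (p := fun a t => Part.some (decide (p a t))) hp.decide.to_comp.partrec₂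
  have hf' : Nat.Partrec _ := hf
  have hu : Nat.Partrec fun n : ℕ => Part.bind (decode (α := α) n.unpair.1) fun a =>
      (Nat.rfind fun t => Part.some (decide (p a t))).map encode :=
    (hf'.comp .left).of_eq fun n => by simp
  obtain ⟨c, hc⟩ := Nat.Partrec.Code.exists_code.1 hu
  have hq : Primrec fun a : α => encode (c.curry (encode a)) :=
    Primrec.encode.comp (Nat.Partrec.Code.primrec₂_curry.comp (Primrec.const c) Primrec.encode)
  have hH : TotalIn O fun n : ℕ => decide (n ∈ haltingSet) := by
    refine totalIn_iff.2 (RecIn.of_eq hO fun n => ?_)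
    by_cases h : n ∈ haltingSet <;> simp [oracleOf, oracleOfSet, h]
  refine (hH.comp (.of_primrec hq)).of_eq fun a => ?_
  congr 1
  simp only [haltingSet, phi, Set.mem_ofPred_eq, Denumerable.ofNat_encode,
    Nat.Partrec.Code.eval_curry, hc, Nat.unpair_pair, encodek, coe_some, bind_some]
  exact propext (Nat.rfind_dom'.trans (by simp))
end Relative

section Strings
open Encodable

/-- All binary strings of length `n`. -/
def allStr : ℕ → List Str
  | 0 => [[]]
  | n + 1 => (allStr n).map (List.cons false) ++ (allStr n).map (List.cons true)

theorem mem_allStr {n : ℕ} {σ : Str} : σ ∈ allStr n ↔ σ.length = n := by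
  induction n generalizing σ with
  | zero => simp [allStr]
  | succ n ih =>
    rcases σ with - | ⟨b, σ⟩
    · simp [allStr]
    · cases b <;> simp [allStr, ih]

theorem nodup_allStr (n : ℕ) : (allStr n).Nodup := by
  induction n with
  | zero => simp [allStr]
  | succ n ih =>
    refine List.Nodup.append (ih.map List.cons_injective) (ih.map List.cons_injective) ?_
    simp [List.Disjoint]

theorem length_allStr (n : ℕ) : (allStr n).length = 2 ^ n := by
  induction n with
  | zero => simp [allStr]
  | succ n ih => simp [allStr, ih, pow_succ]; ring

theorem primrec_allStr : Primrec allStr := by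
  refine (Primrec.nat_rec₁ (f := fun _ L => L.map (List.cons false) ++ L.map (List.cons true))
    [[]] ?_).of_eq fun n => ?_
  · exact Primrec.list_append.comp
      (Primrec.list_map Primrec.snd (Primrec.list_cons.comp₂ (Primrec₂.const _) Primrec₂.right))
      (Primrec.list_map Primrec.snd (Primrec.list_cons.comp₂ (Primrec₂.const _) Primrec₂.right))
  · induction n with
    | zero => rfl
    | succ n ih => simp only [allStr, ih]

theorem primrec_two_pow : Primrec fun n : ℕ => 2 ^ n :=
  (Primrec.list_length.comp primrec_allStr).of_eq length_allStr

end Strings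

section Enumeration
open Encodable

/-- By stage `s`, the `e`-th program has enumerated a prefix of `ρ` into level `e + 2` of the
test it describes. -/
def Covers (e s : ℕ) (ρ : Str) : Prop :=
  ∃ j < ρ.length + 1, (Nat.Partrec.Code.evaln s (Denumerable.ofNat Nat.Partrec.Code e)
    (encode (e + 2, ρ.take j))).isSome

/-- The clopen class enumerated by the `e`-th program by stage `s` has measure at most
`2 ^ (-(e + 2))`. -/
def Small (e s : ℕ) : Prop :=
  ((allStr s).filter (Covers e s ·)).length * 2 ^ (e + 2) ≤ 2 ^ s

/-- The string `π` has not been covered before stage `t`. -/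
def Uncovered (t : ℕ) (π : Str) : Prop :=
  ∀ e < t, ∀ s < t, ¬(Small e s ∧ Covers e s (π.take s))

/-- At stage `t` the uncovered part of `[τ]` is seen to have relative measure less
than `2 ^ (-(k + 1))`. -/
def BadAt (k : ℕ) (τ : Str) (t : ℕ) : Prop :=
  ((allStr t).filter (fun ρ => Uncovered t (τ ++ ρ))).length * 2 ^ (k + 1) < 2 ^ t

/-- The `Σ⁰₁` property underlying `BadAt`. -/
def Bad (k : ℕ) (τ : Str) : Prop := ∃ t, BadAt k τ t

/-- The length of the string coding the first `k` bits. -/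
def len (k : ℕ) : ℕ := k * (k + 3)

/-- The order in which extensions are tried: increasing codes for the bit `false`, decreasing
codes for the bit `true`. -/
def Before (b : Bool) (ρ' ρ : Str) : Prop :=
  (b = false ∧ encode ρ' < encode ρ) ∨ (b = true ∧ encode ρ < encode ρ')

/-- The extensions of `ρ ↾ len k` by `2 * k + 4` bits. -/
def siblings (k : ℕ) (ρ : Str) : List Str :=
  (allStr (2 * k + 4)).map (ρ.take (len k) ++ ·)

/-- At stage `t`, all competitors of `ρ` that come before it are seen to be bad. -/
def FirstAt (x : Bool × ℕ × Str) (t : ℕ) : Prop :=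
  ∀ ρ' ∈ siblings x.2.1 x.2.2, Before x.1 ρ' x.2.2 → BadAt (x.2.1 + 1) ρ' t

open Primrec

theorem primrecRel_exists_lt {β : Type*} [Primcodable β] {r : ℕ → β → Prop}
    (hr : PrimrecRel r) : PrimrecRel fun n y => ∃ x < n, r x y :=
  (hr.exists_mem_list.comp (list_range.comp fst) snd).of_eq (by simp)

theorem primrecRel_forall_lt {β : Type*} [Primcodable β] {r : ℕ → β → Prop}
    (hr : PrimrecRel r) : PrimrecRel fun n y => ∀ x < n, r x y :=
  (hr.forall_mem_list.comp (list_range.comp fst) snd).of_eq (by simp)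

theorem primrecRel_covers : PrimrecRel fun (ρ : Str) (x : ℕ × ℕ) => Covers x.1 x.2 ρ := by
  have h : PrimrecRel fun (j : ℕ) (y : Str × ℕ × ℕ) =>
      (Nat.Partrec.Code.evaln y.2.2 (Denumerable.ofNat Nat.Partrec.Code y.2.1)
        (encode (y.2.1 + 2, y.1.take j))).isSome = true := by
    refine Primrec.eq.comp (option_isSome.comp (Nat.Partrec.Code.primrec_evaln.comp
      (((snd.comp (snd.comp snd)).pair ((Primrec.ofNat _).comp (fst.comp (snd.comp snd)))).pair
        (Primrec.encode.comp ((nat_add.comp (fst.comp (snd.comp snd)) (const 2)).pair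
          (list_take.comp fst (fst.comp snd))))))) (const true)
  exact (primrecRel_exists_lt h).comp (succ.comp (list_length.comp fst)) Primrec.id

theorem primrecRel_small : PrimrecRel Small :=
  nat_le.comp (nat_mul.comp
    (list_length.comp (primrecRel_covers.listFilter.comp (primrec_allStr.comp snd) Primrec.id))
    (primrec_two_pow.comp (nat_add.comp fst (const 2)))) (primrec_two_pow.comp snd)

theorem primrecRel_uncovered : PrimrecRel Uncovered := by
  have h : PrimrecRel fun (s : ℕ) (y : ℕ × Str) => ¬(Small y.1 s ∧ Covers y.1 s (y.2.take s)) :=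
    ((primrecRel_small.comp (fst.comp snd) fst).and
      (primrecRel_covers.comp (list_take.comp fst (snd.comp snd))
        ((fst.comp snd).pair fst))).not
  have h' : PrimrecRel fun (e : ℕ) (y : ℕ × Str) =>
      ∀ s < y.1, ¬(Small e s ∧ Covers e s (y.2.take s)) :=
    (primrecRel_forall_lt h).comp (fst.comp snd) (fst.pair (snd.comp snd))
  exact (primrecRel_forall_lt h').comp fst Primrec.id

theorem primrecRel_badAt : PrimrecRel fun (x : ℕ × Str) (t : ℕ) => BadAt x.1 x.2 t := by
  have h : PrimrecRel fun (ρ : Str) (y : ℕ × Str) => Uncovered y.1 (y.2 ++ ρ) :=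
    primrecRel_uncovered.comp (fst.comp snd) (list_append.comp (snd.comp snd) fst)
  exact nat_lt.comp (nat_mul.comp
    (list_length.comp (h.listFilter.comp (primrec_allStr.comp snd) (snd.pair (snd.comp fst))))
    (primrec_two_pow.comp (succ.comp (fst.comp fst)))) (primrec_two_pow.comp snd)

theorem primrec_len : Primrec len := nat_mul.comp Primrec.id (nat_add.comp Primrec.id (const 3))

theorem primrec_siblings : Primrec₂ siblings :=
  list_map (primrec_allStr.comp (nat_add.comp (nat_mul.comp (const 2) fst) (const 4)))
    (list_append.comp (list_take.comp (primrec_len.comp (fst.comp fst)) (snd.comp fst)) snd).to₂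

theorem primrecRel_firstAt : PrimrecRel FirstAt := by
  have h : PrimrecRel fun (ρ' : Str) (y : (Bool × ℕ × Str) × ℕ) =>
      ¬ Before y.1.1 ρ' y.1.2.2 ∨ BadAt (y.1.2.1 + 1) ρ' y.2 := by
    have hb : Primrec fun z : Str × (Bool × ℕ × Str) × ℕ => z.2.1.1 := fst.comp (fst.comp snd)
    have hρ : Primrec fun z : Str × (Bool × ℕ × Str) × ℕ => encode z.2.1.2.2 :=
      Primrec.encode.comp (snd.comp (snd.comp (fst.comp snd)))
    have hρ' : Primrec fun z : Str × (Bool × ℕ × Str) × ℕ => encode z.1 :=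
      Primrec.encode.comp fst
    exact (((Primrec.eq.comp hb (const false)).and (nat_lt.comp hρ' hρ)).or
      ((Primrec.eq.comp hb (const true)).and (nat_lt.comp hρ hρ'))).not.or
      (primrecRel_badAt.comp ((succ.comp (fst.comp (snd.comp (fst.comp snd)))).pair fst)
        (snd.comp snd))
  exact (h.forall_mem_list.comp
    (primrec_siblings.comp (fst.comp (snd.comp fst)) (snd.comp (snd.comp fst))) Primrec.id).of_eq
      fun y => by simp only [FirstAt, ← imp_iff_not_or, id]

end Enumeration

section Measure
open Encodable
open MeasureTheory

@[simp] theorem length_pre (A : Seq) (n : ℕ) : (pre A n).length = n := by simp [pre]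

theorem getElem_pre (A : Seq) {n i : ℕ} (h : i < (pre A n).length) : (pre A n)[i] = A i := by
  simp [pre]

theorem take_pre (A : Seq) {m n : ℕ} (h : m ≤ n) : (pre A n).take m = pre A m := by
  refine List.ext_getElem (by simpa using h) fun i _ _ => ?_
  simp [getElem_pre]

theorem mem_cyl {A : Seq} {σ : Str} : A ∈ cyl σ ↔ pre A σ.length = σ := Iff.rfl

theorem measurableSet_cyl (σ : Str) : MeasurableSet (cyl σ) := by
  have : cyl σ = ⋂ i : Fin σ.length, (fun A : Seq => A i) ⁻¹' {σ[i]} := by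
    ext A
    simp only [mem_cyl, Set.mem_iInter, Set.mem_preimage, Set.mem_singleton_iff]
    constructor
    · intro h i
      have := getElem_pre A (n := σ.length) (i := i) (by simp)
      simp only [h] at this
      exact this.symm
    · intro h
      exact List.ext_getElem (by simp) fun i h₁ h₂ => (getElem_pre A h₁).trans (h ⟨i, h₂⟩)
  rw [this]
  exact .iInter fun i => measurable_pi_apply _ (measurableSet_singleton _)

theorem cyl_append_subset (τ ρ : Str) : cyl (τ ++ ρ) ⊆ cyl τ := by
  intro A hA
  have h := congrArg (List.take τ.length) (mem_cyl.1 hA)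
  rwa [take_pre A (by simp), List.take_left'] at h
  rfl

theorem disjoint_cyl {σ τ : Str} (hl : σ.length = τ.length) (h : σ ≠ τ) :
    Disjoint (cyl σ) (cyl τ) :=
  Set.disjoint_left.2 fun _ h₁ h₂ => h (h₁.symm.trans (hl ▸ h₂))

/-- A clopen subclass of `[τ]` is the union of its cylinders at a sufficiently deep level. -/
theorem setOf_pre_eq_biUnion (τ : Str) (t : ℕ) (p : Str → Prop) :
    {A | A ∈ cyl τ ∧ p (pre A (τ.length + t))} =
      ⋃ ρ ∈ ((allStr t).filter (fun ρ => p (τ ++ ρ))).toFinset, cyl (τ ++ ρ) := by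
  ext A
  simp only [Set.mem_ofPred_eq, List.mem_toFinset, List.mem_filter, mem_allStr, decide_eq_true_eq,
    Set.mem_iUnion, exists_prop]
  constructor
  · rintro ⟨hA, hp⟩
    have h : τ ++ (pre A (τ.length + t)).drop τ.length = pre A (τ.length + t) := by
      conv_lhs => rw [← mem_cyl.1 hA, length_pre, ← take_pre A (Nat.le_add_right τ.length t)]
      exact List.take_append_drop _ _
    refine ⟨(pre A (τ.length + t)).drop τ.length, ⟨by simp, by rwa [h]⟩, ?_⟩
    rw [h, mem_cyl, length_pre]
  · rintro ⟨ρ, ⟨rfl, hp⟩, hA⟩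
    refine ⟨cyl_append_subset _ _ hA, ?_⟩
    rw [mem_cyl, List.length_append] at hA
    rwa [hA]

theorem measurableSet_setOf_pre (τ : Str) (t : ℕ) (p : Str → Prop) :
    MeasurableSet {A | A ∈ cyl τ ∧ p (pre A (τ.length + t))} := by
  rw [setOf_pre_eq_biUnion]
  exact Finset.measurableSet_biUnion _ fun ρ _ => measurableSet_cyl _

variable {μ : Measure Seq}

theorem FairCoin.real_cyl (hμ : FairCoin μ) (σ : Str) :
    μ.real (cyl σ) = (1 / 2) ^ σ.length := by
  simp [Measure.real, hμ σ]

theorem FairCoin.isProbabilityMeasure (hμ : FairCoin μ) : IsProbabilityMeasure μ := by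
  have h : cyl [] = Set.univ := by ext A; simp [mem_cyl, pre]
  exact ⟨by simpa [h] using hμ []⟩

theorem FairCoin.real_setOf_pre (hμ : FairCoin μ) (τ : Str) (t : ℕ) (p : Str → Prop) :
    μ.real {A | A ∈ cyl τ ∧ p (pre A (τ.length + t))} =
      ((allStr t).filter (fun ρ => p (τ ++ ρ))).length * (1 / 2) ^ (τ.length + t) := by
  have := hμ.isProbabilityMeasure
  rw [setOf_pre_eq_biUnion, measureReal_biUnion_finset]
  · rw [Finset.sum_congr rfl (g := fun _ => (1 / 2 : ℝ) ^ (τ.length + t)), Finset.sum_const,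
      List.toFinset_card_of_nodup ((nodup_allStr t).filter _), nsmul_eq_mul]
    intro ρ hρ
    simp only [List.mem_toFinset, List.mem_filter, mem_allStr] at hρ
    rw [hμ.real_cyl, List.length_append, hρ.1]
  · intro ρ hρ ρ' hρ' hne
    simp only [Finset.mem_coe, List.mem_toFinset, List.mem_filter, mem_allStr] at hρ hρ'
    exact disjoint_cyl (by simp [hρ.1, hρ'.1]) (by simpa using hne)
  · exact fun ρ _ => measurableSet_cyl _

theorem Covers.mono {e s s' : ℕ} {ρ ρ' : Str} (h : Covers e s ρ) (hs : s ≤ s')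
    (hρ : ρ <+: ρ') : Covers e s' ρ' := by
  obtain ⟨j, hj, h⟩ := h
  obtain ⟨v, hv⟩ := Option.isSome_iff_exists.1 h
  refine ⟨j, hj.trans_le (Nat.succ_le_succ hρ.length_le), Option.isSome_iff_exists.2 ⟨v, ?_⟩⟩
  have : ρ'.take j = ρ.take j := by
    obtain ⟨π, rfl⟩ := hρ
    exact List.take_append_of_le_length (by omega)
  rw [this]
  exact Nat.Partrec.Code.evaln_mono hs hv

theorem pre_prefix (A : Seq) {m n : ℕ} (h : m ≤ n) : pre A m <+: pre A n :=
  take_pre A h ▸ List.take_prefix _ _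

/-- The clopen class enumerated by the `e`-th program by stage `s`. -/
def coveredClass (e s : ℕ) : Set Seq := {A | Covers e s (pre A s)}

theorem coveredClass_mono (e : ℕ) : Monotone (coveredClass e) :=
  fun _ _ h A hA => Covers.mono hA h (pre_prefix A h)

theorem coveredClass_eq (e s : ℕ) :
    coveredClass e s = {A | A ∈ cyl [] ∧ Covers e s (pre A (([] : Str).length + s))} := by
  ext A
  simp [coveredClass, mem_cyl, pre]

theorem FairCoin.small_iff (hμ : FairCoin μ) (e s : ℕ) :
    Small e s ↔ μ.real (coveredClass e s) ≤ (1 / 2) ^ (e + 2) := by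
  rw [coveredClass_eq, hμ.real_setOf_pre]
  simp only [List.nil_append, List.length_nil, zero_add, Small, one_div, inv_pow]
  rw [← div_eq_mul_inv, div_le_iff₀ (by positivity), ← div_eq_inv_mul, le_div_iff₀ (by positivity)]
  exact_mod_cast Iff.rfl

/-- The universal open class: the union of the truncated levels `e + 2` of the tests described by
the programs `e`. -/
def openClass : Set Seq := {A | ∃ e s, Small e s ∧ A ∈ coveredClass e s}

theorem FairCoin.real_openClass_le (hμ : FairCoin μ) : μ.real openClass ≤ 1 / 2 := by
  have := hμ.isProbabilityMeasure
  let T : ℕ → ℕ → Set Seq := fun e s => {A | Small e s ∧ A ∈ coveredClass e s}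
  have hT : ∀ e, μ (⋃ s, T e s) ≤ (2 : ℝ≥0∞)⁻¹ ^ (e + 2) := by
    intro e
    rw [measure_iUnion_eq_iSup_accumulate]
    refine iSup_le fun n => ?_
    have hsub : Set.accumulate (T e) n = ∅ ∨
        ∃ s, Small e s ∧ Set.accumulate (T e) n ⊆ coveredClass e s := by
      induction n with
      | zero =>
        by_cases h : Small e 0
        · exact .inr ⟨0, h, by intro A; simp [T]⟩
        · exact .inl (by ext A; simp [T, h])
      | succ n ih =>
        rw [Set.accumulate_succ]
        by_cases h : Small e (n + 1)
        · refine .inr ⟨n + 1, h, Set.union_subset (fun A hA => ?_) fun A hA => hA.2⟩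
          obtain ⟨s, hs, hA⟩ := Set.mem_accumulate.1 hA
          exact coveredClass_mono e (hs.trans n.le_succ) hA.2
        · have : T e (n + 1) = ∅ := by ext A; simp [T, h]
          rwa [this, Set.union_empty]
    rcases hsub with h | ⟨s, hs, h⟩
    · simp [h]
    · refine (measure_mono h).trans ?_
      have := (hμ.small_iff e s).1 hs
      rw [← ofReal_measureReal]
      refine (ENNReal.ofReal_le_ofReal this).trans ?_
      rw [ENNReal.ofReal_pow (by norm_num), one_div, ENNReal.ofReal_inv_of_pos (by norm_num)]
      simp
  have hU : openClass = ⋃ e, ⋃ s, T e s := by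
    ext A
    simp [openClass, T]
  have : μ openClass ≤ 2⁻¹ := by
    rw [hU]
    refine (measure_iUnion_le _).trans ((ENNReal.tsum_le_tsum hT).trans ?_)
    simp_rw [pow_add]
    rw [ENNReal.tsum_mul_right, ENNReal.tsum_geometric, ENNReal.one_sub_inv_two, inv_inv, pow_two,
      ← mul_assoc, ENNReal.mul_inv_cancel (by simp) (by simp), one_mul]
  refine ENNReal.toReal_le_of_le_ofReal (by norm_num) (this.trans ?_)
  rw [one_div, ENNReal.ofReal_inv_of_pos (by norm_num)]
  simp

/-- A sequence outside the universal open class is Martin-Löf random. -/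
theorem FairCoin.mlRandom_of_notMem (hμ : FairCoin μ) {R : Seq} (hR : R ∉ openClass) :
    MLRandom μ R := by
  have := hμ.isProbabilityMeasure
  rintro U ⟨W, hW, hU, hle⟩ hmem
  obtain ⟨c, hc⟩ := Nat.Partrec.Code.exists_code.1 hW
  have hdom : ∀ x : ℕ × Str, (c.eval (encode x)).Dom ↔ x ∈ W := by
    intro x
    rw [hc]
    simp [encodek, Part.assert]
  have hsub : ∀ s, coveredClass (encode c) s ⊆ U (encode c + 2) := by
    rintro s A ⟨j, hj, h⟩
    obtain ⟨v, hv⟩ := Option.isSome_iff_exists.1 h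
    rw [Denumerable.ofNat_encode] at hv
    have hm := (hdom _).1 (Part.dom_iff_mem.2 ⟨v, Nat.Partrec.Code.evaln_sound hv⟩)
    rw [hU]
    refine Set.mem_biUnion hm ?_
    rw [length_pre] at hj
    rw [take_pre A (by omega), mem_cyl, length_pre]
  have hsmall : ∀ s, Small (encode c) s := by
    intro s
    rw [hμ.small_iff]
    refine ENNReal.toReal_le_of_le_ofReal (by positivity)
      ((measure_mono (hsub s)).trans ((hle _).trans ?_))
    rw [ENNReal.ofReal_pow (by norm_num), one_div, ENNReal.ofReal_inv_of_pos (by norm_num)]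
    simp
  have hRU := Set.mem_iInter.1 hmem (encode c + 2)
  rw [hU] at hRU
  simp only [Set.mem_iUnion, Set.mem_ofPred_eq] at hRU
  obtain ⟨σ, hσ, hRσ⟩ := hRU
  obtain ⟨v, hv⟩ := Part.dom_iff_mem.1 ((hdom _).2 hσ)
  obtain ⟨s, hs⟩ := Nat.Partrec.Code.evaln_complete.1 hv
  refine hR ⟨encode c, max s σ.length, hsmall _, σ.length, by simp, ?_⟩
  rw [take_pre R (le_max_right _ _), mem_cyl.1 hRσ, Denumerable.ofNat_encode]
  exact Option.isSome_iff_exists.2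
    ⟨v, Nat.Partrec.Code.evaln_mono (le_max_left _ _) hs⟩

/-- The part of `[τ]` that is uncovered at stage `t`. -/
def uncoveredPart (τ : Str) (t : ℕ) : Set Seq :=
  {A | A ∈ cyl τ ∧ Uncovered t (pre A (τ.length + t))}

theorem mem_uncoveredPart {τ : Str} {t : ℕ} {A : Seq} : A ∈ uncoveredPart τ t ↔
    A ∈ cyl τ ∧ ∀ e < t, ∀ s < t, ¬(Small e s ∧ A ∈ coveredClass e s) := by
  refine and_congr_right fun _ => forall₄_congr fun e _ s hs => ?_
  rw [take_pre A (by omega)]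
  rfl

theorem uncoveredPart_antitone (τ : Str) : Antitone (uncoveredPart τ) := by
  intro t t' h A hA
  rw [mem_uncoveredPart] at hA ⊢
  exact ⟨hA.1, fun e he s hs => hA.2 e (he.trans_le h) s (hs.trans_le h)⟩

theorem iInter_uncoveredPart (τ : Str) : ⋂ t, uncoveredPart τ t = cyl τ \ openClass := by
  ext A
  simp only [Set.mem_iInter, mem_uncoveredPart, Set.mem_sdiff]
  constructor
  · intro h
    refine ⟨(h 0).1, ?_⟩
    rintro ⟨e, s, hes⟩
    exact (h (max e s + 1)).2 e (by omega) s (by omega) hes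
  · exact fun h t => ⟨h.1, fun e _ s _ hes => h.2 ⟨e, s, hes⟩⟩

theorem FairCoin.badAt_iff (hμ : FairCoin μ) (k : ℕ) (τ : Str) (t : ℕ) :
    BadAt k τ t ↔ μ.real (uncoveredPart τ t) < (1 / 2) ^ (τ.length + k + 1) := by
  rw [uncoveredPart, hμ.real_setOf_pre, pow_add _ τ.length t, add_assoc, pow_add _ τ.length,
    mul_left_comm, mul_lt_mul_iff_right₀ (by positivity)]
  simp only [BadAt, one_div, inv_pow]
  rw [← div_eq_mul_inv, div_lt_iff₀ (by positivity), ← div_eq_inv_mul, lt_div_iff₀ (by positivity)]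
  exact_mod_cast Iff.rfl

theorem FairCoin.badAt_mono (hμ : FairCoin μ) {k : ℕ} {τ : Str} {t t' : ℕ} (h : BadAt k τ t)
    (ht : t ≤ t') : BadAt k τ t' := by
  have := hμ.isProbabilityMeasure
  rw [hμ.badAt_iff] at h ⊢
  exact (measureReal_mono (uncoveredPart_antitone τ ht)).trans_lt h

theorem FairCoin.bad_iff (hμ : FairCoin μ) (k : ℕ) (τ : Str) :
    Bad k τ ↔ μ.real (cyl τ \ openClass) < (1 / 2) ^ (τ.length + k + 1) := by
  have := hμ.isProbabilityMeasure
  simp only [Bad, hμ.badAt_iff, ← iInter_uncoveredPart]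
  constructor
  · rintro ⟨t, ht⟩
    exact (measureReal_mono (Set.iInter_subset _ t)).trans_lt ht
  · intro h
    have hlim := tendsto_measure_iInter_atTop (μ := μ)
      (fun t => (measurableSet_setOf_pre τ t (Uncovered t)).nullMeasurableSet)
      (uncoveredPart_antitone τ) ⟨0, measure_ne_top _ _⟩
    have hlim' := (ENNReal.tendsto_toReal (measure_ne_top _ _)).comp hlim
    exact ((hlim'.eventually_lt_const h)).exists

theorem FairCoin.not_bad_nil (hμ : FairCoin μ) : ¬Bad 0 [] := by
  have := hμ.isProbabilityMeasure
  rw [hμ.bad_iff, not_lt]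
  have h := measureReal_mono (μ := μ) (Set.subset_union_left (s := cyl []) (t := openClass))
  rw [← Set.sdiff_union_self] at h
  have h' := h.trans (measureReal_union_le _ _)
  rw [hμ.real_cyl] at h'
  have := hμ.real_openClass_le
  simp only [List.length_nil, pow_zero, zero_add, pow_one] at h' ⊢
  linarith

/-- A string that is not bad has two extensions that are not bad. -/
theorem FairCoin.exists_two_not_bad (hμ : FairCoin μ) {k : ℕ} {σ : Str} (h : ¬Bad k σ) :
    ∃ τ ∈ allStr (2 * k + 4), ∃ τ' ∈ allStr (2 * k + 4), τ ≠ τ' ∧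
      ¬Bad (k + 1) (σ ++ τ) ∧ ¬Bad (k + 1) (σ ++ τ') := by
  have := hμ.isProbabilityMeasure
  by_contra! hcon
  apply h
  rw [hμ.bad_iff]
  set ℓ := 2 * k + 4 with hℓ
  have hcov : cyl σ \ openClass ⊆ ⋃ τ ∈ (allStr ℓ).toFinset, cyl (σ ++ τ) \ openClass := by
    rintro A ⟨hA, hAU⟩
    have hA' := (setOf_pre_eq_biUnion σ ℓ fun _ => True).subset ⟨hA, trivial⟩
    simp only [Set.mem_iUnion, List.mem_toFinset, decide_true, List.filter_true] at hA' ⊢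
    obtain ⟨τ, hτ, hAτ⟩ := hA'
    exact ⟨τ, hτ, hAτ, hAU⟩
  have hle := (measureReal_mono hcov (measure_ne_top _ _)).trans (measureReal_biUnion_finset_le (μ := μ) _ _)
  have hone : ∀ τ ∈ allStr ℓ, μ.real (cyl (σ ++ τ) \ openClass) ≤ (1 / 2) ^ (σ.length + ℓ) := by
    intro τ hτ
    refine (measureReal_mono Set.sdiff_subset).trans ?_
    rw [hμ.real_cyl, List.length_append, mem_allStr.1 hτ]
  have hbad : ∀ τ ∈ allStr ℓ, Bad (k + 1) (σ ++ τ) →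
      μ.real (cyl (σ ++ τ) \ openClass) ≤ (1 / 2) ^ (σ.length + ℓ + k + 2) := by
    intro τ hτ hb
    rw [hμ.bad_iff, List.length_append, mem_allStr.1 hτ] at hb
    exact hb.le
  have hcard : ((allStr ℓ).toFinset.card : ℝ) = 2 ^ ℓ := by
    rw [List.toFinset_card_of_nodup (nodup_allStr ℓ), length_allStr]
    norm_cast
  have hsum : ∑ τ ∈ (allStr ℓ).toFinset, μ.real (cyl (σ ++ τ) \ openClass) ≤
      (1 / 2) ^ (σ.length + ℓ) + 2 ^ ℓ * (1 / 2) ^ (σ.length + ℓ + k + 2) := by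
    by_cases hg : ∃ τ₀ ∈ allStr ℓ, ¬Bad (k + 1) (σ ++ τ₀)
    · obtain ⟨τ₀, hτ₀, hg⟩ := hg
      rw [← Finset.add_sum_erase _ _ (List.mem_toFinset.2 hτ₀), ← hcard]
      refine add_le_add (hone _ hτ₀) ?_
      refine (Finset.sum_le_card_nsmul _ _ _ fun τ hτ => hbad τ ?_ ?_).trans ?_
      · exact List.mem_toFinset.1 (Finset.mem_of_mem_erase hτ)
      · exact hcon τ₀ hτ₀ τ (List.mem_toFinset.1 (Finset.mem_of_mem_erase hτ))
          (Finset.ne_of_mem_erase hτ).symm hg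
      · rw [nsmul_eq_mul]
        gcongr
        exact Finset.erase_subset _ _
    · push Not at hg
      refine (Finset.sum_le_card_nsmul _ _ _ fun τ hτ => hbad τ (List.mem_toFinset.1 hτ)
        (hg τ (List.mem_toFinset.1 hτ))).trans ?_
      rw [nsmul_eq_mul, hcard]
      exact le_add_of_nonneg_left (by positivity)
  refine (hle.trans hsum).trans_lt ?_
  have h₁ : (2 : ℝ) ^ ℓ * (1 / 2) ^ (σ.length + ℓ + k + 2) =
      (1 / 2) ^ (σ.length + k + 1) * (1 / 2) := by
    have : (2 : ℝ) ^ ℓ * (1 / 2) ^ ℓ = 1 := by rw [← mul_pow]; norm_num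
    calc _ = ((2 : ℝ) ^ ℓ * (1 / 2) ^ ℓ) * ((1 / 2) ^ (σ.length + k + 1) * (1 / 2)) := by ring
      _ = _ := by rw [this, one_mul]
  have h₂ : (1 / 2 : ℝ) ^ (σ.length + ℓ) ≤ (1 / 2) ^ (σ.length + k + 1) * (1 / 4) := by
    have : (1 / 2 : ℝ) ^ (σ.length + ℓ) ≤ (1 / 2) ^ (σ.length + k + 1 + 2) :=
      pow_le_pow_of_le_one (by norm_num) (by norm_num) (by omega)
    rw [pow_add _ _ 2] at this
    norm_num at this ⊢
    exact this
  have h₃ : (0 : ℝ) < (1 / 2) ^ (σ.length + k + 1) := by positivity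
  rw [h₁]
  linarith

theorem FairCoin.bad_of_covered (hμ : FairCoin μ) {R : Seq} {e s : ℕ} (hs : Small e s)
    (hR : R ∈ coveredClass e s) (k : ℕ) {n : ℕ} (hn : s ≤ n) : Bad k (pre R n) := by
  rw [hμ.bad_iff]
  have : cyl (pre R n) \ openClass = ∅ := by
    refine Set.sdiff_eq_empty.2 fun A hA => ⟨e, s, hs, ?_⟩
    rw [mem_cyl, length_pre] at hA
    have h : pre A s = pre R s := by rw [← take_pre A hn, hA, take_pre R hn]
    simpa [coveredClass, h] using hR
  rw [this]
  simp

end Measure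

section Coding
open Encodable
open MeasureTheory
variable {μ : Measure Seq}

theorem len_succ (k : ℕ) : len (k + 1) = len k + (2 * k + 4) := by simp only [len]; ring

theorem le_len (k : ℕ) : k ≤ len k := Nat.le_mul_of_pos_right k (by omega)

theorem mem_siblings {k : ℕ} {ρ ρ' : Str} (h : len k ≤ ρ.length) :
    ρ' ∈ siblings k ρ ↔ ρ'.length = len (k + 1) ∧ ρ'.take (len k) = ρ.take (len k) := by
  simp only [siblings, List.mem_map, mem_allStr, len_succ]
  constructor
  · rintro ⟨τ, hτ, rfl⟩
    simp [hτ, h]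
  · rintro ⟨hl, ht⟩
    exact ⟨ρ'.drop (len k), by simp [hl], by rw [← ht, List.take_append_drop]⟩

/-- The string `ρ` codes the bit `b` over `σ`: it is the first extension of `σ` that is not
bad in the order associated with `b`. -/
structure Codes (b : Bool) (k : ℕ) (σ ρ : Str) : Prop where
  length_eq : ρ.length = len (k + 1)
  take_eq : ρ.take (len k) = σ
  not_bad : ¬Bad (k + 1) ρ
  first : ∃ t, FirstAt (b, k, ρ) t

theorem before_total (b : Bool) {ρ ρ' : Str} (h : ρ ≠ ρ') : Before b ρ ρ' ∨ Before (!b) ρ ρ' := by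
  have : encode ρ ≠ encode ρ' := fun h' => h (encode_injective h')
  rcases this.lt_or_gt with h | h <;> cases b <;> simp [Before, h]

theorem FairCoin.exists_firstAt (hμ : FairCoin μ) {x : Bool × ℕ × Str}
    (h : ∀ ρ' ∈ siblings x.2.1 x.2.2, Before x.1 ρ' x.2.2 → Bad (x.2.1 + 1) ρ') :
    ∃ t, FirstAt x t := by
  choose! f hf using h
  refine ⟨((siblings x.2.1 x.2.2).map f).sum, fun ρ' hρ' hb => hμ.badAt_mono (hf ρ' hρ' hb) ?_⟩
  exact List.single_le_sum (by simp) _ (List.mem_map_of_mem hρ')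

theorem FairCoin.exists_codes (hμ : FairCoin μ) (b : Bool) {k : ℕ} {σ : Str} (h : ¬Bad k σ)
    (hl : σ.length = len k) : ∃ ρ, Codes b k σ ρ := by
  obtain ⟨τ, hτ, -, -, -, hbad, -⟩ := hμ.exists_two_not_bad h
  let S : Finset Str := (allStr (len (k + 1))).toFinset.filter
    fun ρ => ρ.take (len k) = σ ∧ ¬Bad (k + 1) ρ
  have hS : S.Nonempty := ⟨σ ++ τ, by
    simp [S, mem_allStr, mem_allStr.1 hτ, hl, len_succ, hbad]⟩
  have key : ∀ ρ ∈ S, (∀ ρ' ∈ S, ¬Before b ρ' ρ) → Codes b k σ ρ := by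
    intro ρ hρ hmin
    simp only [S, Finset.mem_filter, List.mem_toFinset, mem_allStr] at hρ hmin
    refine ⟨hρ.1, hρ.2.1, hρ.2.2, hμ.exists_firstAt fun ρ' hρ' hb => ?_⟩
    rw [mem_siblings (by simp [hρ.1, len_succ])] at hρ'
    by_contra hnb
    exact hmin ρ' ⟨hρ'.1, hρ'.2.trans hρ.2.1, hnb⟩ hb
  cases b with
  | false =>
    obtain ⟨ρ, hρ, hmin⟩ := S.exists_min_image encode hS
    exact ⟨ρ, key ρ hρ fun ρ' hρ' => by simpa [Before] using hmin ρ' hρ'⟩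
  | true =>
    obtain ⟨ρ, hρ, hmax⟩ := S.exists_max_image encode hS
    exact ⟨ρ, key ρ hρ fun ρ' hρ' => by simpa [Before] using hmax ρ' hρ'⟩

theorem FairCoin.not_firstAt_of_codes (hμ : FairCoin μ) {b : Bool} {k : ℕ} {σ ρ : Str}
    (h : ¬Bad k σ) (hl : σ.length = len k) (hρ : Codes b k σ ρ) (t : ℕ) :
    ¬FirstAt (!b, k, ρ) t := by
  intro hf
  obtain ⟨τ, hτ, τ', hτ', hne, hbad, hbad'⟩ := hμ.exists_two_not_bad h
  obtain ⟨t', hf'⟩ := hρ.first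
  have key : ∀ τ ∈ allStr (2 * k + 4), ¬Bad (k + 1) (σ ++ τ) → σ ++ τ = ρ := by
    intro τ hτ hb
    by_contra hne
    have hmem : σ ++ τ ∈ siblings k ρ := by
      rw [mem_siblings (by simp [hρ.length_eq, len_succ]), hρ.take_eq]
      simp [hl, mem_allStr.1 hτ, len_succ]
    rcases before_total b hne with h' | h'
    · exact hb ⟨_, hf' _ hmem h'⟩
    · exact hb ⟨_, hf _ hmem h'⟩
  exact hne (List.append_cancel_left ((key τ hτ hbad).trans (key τ' hτ' hbad').symm))

/-- The search condition for the next string: it is met by every string if `x.2` is not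
a legitimate string at level `x.1`. -/
def Next (A : Seq) (x : ℕ × Str) (ρ : Str) : Prop :=
  Bad x.1 x.2 ∨ x.2.length ≠ len x.1 ∨ Codes (A x.1) x.1 x.2 ρ

theorem FairCoin.exists_next (hμ : FairCoin μ) (A : Seq) (x : ℕ × Str) :
    ∃ n, decide (Next A x ((decode n : Option Str).getD [])) = true := by
  by_cases h : Bad x.1 x.2
  · exact ⟨0, by simp [Next, h]⟩
  by_cases hl : x.2.length = len x.1
  · obtain ⟨ρ, hρ⟩ := hμ.exists_codes (A x.1) h hl
    exact ⟨encode ρ, by simp [Next, hρ]⟩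
  · exact ⟨0, by simp [Next, hl]⟩

theorem totalIn_next {A : Seq} (hA : TuringLE (oracleOfSet haltingSet) (oracleOf A)) :
    TotalIn (oracleOf A) fun x : (ℕ × Str) × ℕ =>
      decide (Next A x.1 ((decode x.2 : Option Str).getD [])) := by
  have hσ : Primrec fun x : (ℕ × Str) × ℕ => x.1.2 := Primrec.snd.comp Primrec.fst
  have hk : Primrec fun x : (ℕ × Str) × ℕ => x.1.1 := Primrec.fst.comp Primrec.fst
  have hρ : Primrec fun x : (ℕ × Str) × ℕ => (decode x.2 : Option Str).getD [] :=
    Primrec.option_getD.comp (Primrec.decode.comp Primrec.snd) (Primrec.const [])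
  have hk' : Primrec fun x : (ℕ × Str) × ℕ => x.1.1 + 1 := Primrec.succ.comp hk
  have hAk : TotalIn (oracleOf A) fun x : (ℕ × Str) × ℕ => A x.1.1 :=
    (TotalIn.oracle A).comp (.of_primrec hk)
  have hbad := TotalIn.decide_exists primrecRel_badAt hA
  have h₁ := hbad.comp (TotalIn.of_primrec (Primrec.fst (α := ℕ × Str) (β := ℕ)))
  have h₂ := hbad.comp (TotalIn.of_primrec (hk'.pair hρ))
  have h₃ := (TotalIn.decide_exists primrecRel_firstAt hA).comp
    (hAk.pair (TotalIn.of_primrec (hk.pair hρ)))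
  have h₄ : PrimrecPred fun x : (ℕ × Str) × ℕ => x.1.2.length ≠ len x.1.1 :=
    (Primrec.eq.comp (Primrec.list_length.comp hσ) (primrec_len.comp hk)).not
  have h₅ : PrimrecPred fun x : (ℕ × Str) × ℕ =>
      ((decode x.2 : Option Str).getD []).length = len (x.1.1 + 1) ∧
        ((decode x.2 : Option Str).getD []).take (len x.1.1) = x.1.2 :=
    (Primrec.eq.comp (Primrec.list_length.comp hρ) (primrec_len.comp hk')).and
      (Primrec.eq.comp (Primrec.list_take.comp (primrec_len.comp hk) hρ) hσ)
  have hor : ∀ {f g : (ℕ × Str) × ℕ → Bool}, TotalIn (oracleOf A) f → TotalIn (oracleOf A) g →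
      TotalIn (oracleOf A) fun x => f x || g x :=
    fun hf hg => (TotalIn.of_primrec (Primrec₂.uncurry.2 Primrec.or)).comp (hf.pair hg)
  have hand : ∀ {f g : (ℕ × Str) × ℕ → Bool}, TotalIn (oracleOf A) f → TotalIn (oracleOf A) g →
      TotalIn (oracleOf A) fun x => f x && g x :=
    fun hf hg => (TotalIn.of_primrec (Primrec₂.uncurry.2 Primrec.and)).comp (hf.pair hg)
  refine (hor h₁ (hor (.of_primrec h₄.decide) (hand (.of_primrec h₅.decide)
    (hand ((TotalIn.of_primrec Primrec.not).comp h₂) h₃)))).of_eq fun x => ?_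
  rw [Bool.eq_iff_iff]
  simp only [Bool.or_eq_true, Bool.and_eq_true, decide_eq_true_eq, Bool.not_eq_true',
    decide_eq_false_iff_not]
  refine or_congr Iff.rfl (or_congr Iff.rfl ⟨fun h => ⟨h.1.1, h.1.2, h.2.1, h.2.2⟩, fun h =>
    ⟨⟨h.length_eq, h.take_eq⟩, h.not_bad, h.first⟩⟩)

theorem FairCoin.exists_coding (hμ : FairCoin μ) {A : Seq}
    (hA : TuringLE (oracleOfSet haltingSet) (oracleOf A)) :
    ∃ σ : ℕ → Str, TotalIn (oracleOf A) σ ∧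
      ∀ k, ¬Bad k (σ k) ∧ (σ k).length = len k ∧ Codes (A k) k (σ k) (σ (k + 1)) := by
  let g : ℕ × Str → Str := fun x =>
    (decode (Nat.find (hμ.exists_next A x)) : Option Str).getD []
  have hdecode : Primrec fun n : ℕ => (decode n : Option Str).getD [] :=
    Primrec.option_getD.comp Primrec.decode (Primrec.const [])
  have hg : TotalIn (oracleOf A) g :=
    (TotalIn.of_primrec hdecode).comp (TotalIn.find
      (p := fun x n => decide (Next A x ((decode n : Option Str).getD [])))
      (totalIn_next hA) (hμ.exists_next A))
  have hnext : ∀ x, Next A x (g x) := fun x => of_decide_eq_true (Nat.find_spec (hμ.exists_next A x))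
  let σ : ℕ → Str := fun n => n.rec [] fun k ih => g (k, ih)
  have hstep : ∀ k, ¬Bad k (σ k) → (σ k).length = len k → Codes (A k) k (σ k) (σ (k + 1)) := by
    intro k hb hl
    rcases hnext (k, σ k) with h | h | h
    · exact absurd h hb
    · exact absurd hl h
    · exact h
  have hinv : ∀ k, ¬Bad k (σ k) ∧ (σ k).length = len k := by
    intro k
    induction k with
    | zero => exact ⟨hμ.not_bad_nil, by simp [σ, len]⟩
    | succ k ih => exact ⟨(hstep k ih.1 ih.2).not_bad, (hstep k ih.1 ih.2).length_eq⟩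
  exact ⟨σ, TotalIn.nat_rec [] hg, fun k => ⟨(hinv k).1, (hinv k).2, hstep k (hinv k).1 (hinv k).2⟩⟩

/-- The limit of a computable chain of strings of lengths `len k`. -/
theorem exists_limit {O : ℕ →. ℕ} {σ : ℕ → Str} (hσ : TotalIn O σ)
    (hl : ∀ k, (σ k).length = len k) (ht : ∀ k, (σ (k + 1)).take (len k) = σ k) :
    ∃ R : Seq, TotalIn O R ∧ ∀ k, pre R (len k) = σ k := by
  have hpre : ∀ j k, j ≤ k → σ j <+: σ k := by
    intro j k h
    induction k, h using Nat.le_induction with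
    | base => exact List.prefix_rfl
    | succ k _ ih => exact ih.trans (ht k ▸ List.take_prefix _ _)
  refine ⟨fun n => (σ (n + 1)).getD n false, ?_, fun k => ?_⟩
  · exact (TotalIn.of_primrec ((Primrec.list_getD false).comp Primrec.fst Primrec.snd)).comp
      ((hσ.comp (.of_primrec Primrec.succ)).pair (.of_primrec Primrec.id))
  · refine List.ext_getElem (by simp [hl]) fun i h₁ h₂ => ?_
    have h₃ : i < (σ (i + 1)).length := by rw [hl]; exact le_len (i + 1)
    rw [getElem_pre, List.getD_eq_getElem _ _ h₃]
    rcases le_total (i + 1) k with h | h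
    · exact (hpre _ _ h).getElem h₃
    · exact ((hpre _ _ h).getElem h₂).symm

/-- The coded sequence can be read off from the limit of a coding. -/
theorem FairCoin.totalIn_of_codes (hμ : FairCoin μ) {A R : Seq}
    (hc : ∀ k, ¬Bad k (pre R (len k)) ∧ Codes (A k) k (pre R (len k)) (pre R (len (k + 1)))) :
    TotalIn (oracleOf R) A := by
  have hρ : TotalIn (oracleOf R) fun k => pre R (len (k + 1)) :=
    (TotalIn.pre R).comp (.of_primrec (primrec_len.comp Primrec.succ))
  have hwrong : ∀ k t, ¬FirstAt (!A k, k, pre R (len (k + 1))) t := fun k t =>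
    hμ.not_firstAt_of_codes (hc k).1 (length_pre _ _) (hc k).2 t
  obtain ⟨D, hD, hDt⟩ : ∃ D : Bool × ℕ × ℕ → Bool,
      (∀ b k t, D (b, k, t) = true ↔ FirstAt (b, k, pre R (len (k + 1))) t) ∧
        TotalIn (oracleOf R) D := by
    have h : Primrec fun y : (Bool × ℕ × Str) × ℕ => decide (FirstAt y.1 y.2) :=
      primrecRel_firstAt.decide
    have h₁ : TotalIn (oracleOf R) fun x : Bool × ℕ × ℕ => x.2.1 :=
      .of_primrec (Primrec.fst.comp Primrec.snd)
    exact ⟨_, fun b k t => decide_eq_true_iff, (TotalIn.of_primrec h).comp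
      (((TotalIn.of_primrec Primrec.fst).pair (h₁.pair (hρ.comp h₁))).pair
        (.of_primrec (Primrec.snd.comp Primrec.snd)))⟩
  have hDb : ∀ b, TotalIn (oracleOf R) fun x : ℕ × ℕ => D (b, x) := fun b =>
    hDt.comp (.of_primrec ((Primrec.const b).pair Primrec.id))
  have hp : TotalIn (oracleOf R) fun x : ℕ × ℕ => D (false, x.1, x.2) || D (true, x.1, x.2) :=
    (TotalIn.of_primrec (Primrec₂.uncurry.2 Primrec.or)).comp ((hDb false).pair (hDb true))
  have hex : ∀ k, ∃ t, (D (false, k, t) || D (true, k, t)) = true := by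
    intro k
    obtain ⟨t, ht⟩ := (hc k).2.first
    refine ⟨t, ?_⟩
    rw [← hD] at ht
    cases h : A k <;> simp [h ▸ ht]
  have hfind := TotalIn.find (p := fun k t => D (false, k, t) || D (true, k, t)) hp hex
  refine ((hDb true).comp ((TotalIn.of_primrec Primrec.id).pair hfind)).of_eq fun k => ?_
  have hspec := Nat.find_spec (hex k)
  have hw := hwrong k (Nat.find (hex k))
  rw [← hD] at hw
  rw [Bool.or_eq_true] at hspec
  cases h : A k <;> rw [h] at hw
  · exact Bool.eq_false_iff.2 hw
  · exact hspec.resolve_left hw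

end Coding

/-- **Kučera**: every sequence computing the halting problem is Turing equivalent to a
Martin-Löf random sequence; hence every Turing degree above `0'` contains a
Martin-Löf random sequence. -/
theorem kucera_above_jump (μ : MeasureTheory.Measure Seq) (hμ : FairCoin μ)
    (A : Seq) (hA : TuringLE (oracleOfSet haltingSet) (oracleOf A)) :
    ∃ R : Seq, MLRandom μ R ∧
      TuringLE (oracleOf R) (oracleOf A) ∧ TuringLE (oracleOf A) (oracleOf R) := by
  obtain ⟨σ, hσ, hc⟩ := hμ.exists_coding hA
  obtain ⟨R, hR, hpre⟩ := exists_limit hσ (fun k => (hc k).2.1) fun k => (hc k).2.2.take_eq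
  refine ⟨R, hμ.mlRandom_of_notMem ?_, totalIn_iff.1 hR, totalIn_iff.1 (hμ.totalIn_of_codes ?_)⟩
  · rintro ⟨e, s, hs, hRs⟩
    apply (hc s).1
    rw [← hpre]
    exact hμ.bad_of_covered hs hRs s (le_len s)
  · intro k
    rw [hpre, hpre]
    exact ⟨(hc k).1, (hc k).2.2⟩

end AR
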